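/- The following q-identity of fermionic type holds: ((-q^{1/2}t; q)_∞ (-q^{1/2}t^{-1}; q)_∞ (q;q)_∞²) / ((qt;q)_∞ (qt^{-1};q)_∞ (-q^{1/2};q)_∞²) = 1 + (t^{1/2} - t^{-1/2}) · Σ_{r=0}^∞ [ (-1)^r (q^{r+1}t)^{1/2}/(1 - q^{r+1}t) - (-1)^r (q^{r+1}t^{-1})^{1/2}/(1 - q^{r+1}t^{-1}) ]. -/

import Mathlib

/-- The `q`-Pochhammer symbol `(a;q)_∞ = ∏_{r≥0} (1 - a q^r)`. -/
noncomputable def qpoch (a q : ℂ) : ℂ := ∏' r : ℕ, (1 - a * q ^ r)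

namespace FQ
open Finset Filter Topology

noncomputable def al (s : ℂ) (n : ℕ) : ℂ := ∏ r ∈ range n, (1 + s ^ (2 * r + 1))
noncomputable def be (s : ℂ) (n : ℕ) : ℂ := ∏ r ∈ range n, (1 - s ^ (2 * (r + 1)))
noncomputable def bb (s : ℂ) (j : ℕ) (w : ℂ) : ℂ := 1 + s ^ (4 * j) - s ^ (2 * j) * w
noncomputable def PP (s : ℂ) (n : ℕ) (w : ℂ) : ℂ :=
  ∏ r ∈ range n, (1 + s ^ (4 * r + 2) + s ^ (2 * r + 1) * w)
noncomputable def nd (s : ℂ) (k : ℕ) : ℂ := s ^ (2 * k) + (s ^ (2 * k))⁻¹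

lemma pow_ne_one {s : ℂ} (hs : ‖s‖ < 1) {n : ℕ} (hn : n ≠ 0) : 1 - s ^ n ≠ 0 := by
  intro h
  have h' : s ^ n = 1 := by linear_combination -h
  have : ‖s‖ ^ n < 1 := pow_lt_one₀ (norm_nonneg _) hs hn
  rw [← norm_pow, h'] at this
  simp at this

lemma pow_ne_neg_one {s : ℂ} (hs : ‖s‖ < 1) {n : ℕ} (hn : n ≠ 0) : 1 + s ^ n ≠ 0 := by
  intro h
  have h' : s ^ n = -1 := by linear_combination h
  have : ‖s‖ ^ n < 1 := pow_lt_one₀ (norm_nonneg _) hs hn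
  rw [← norm_pow, h'] at this
  simp at this

lemma be_ne {s : ℂ} (hs : ‖s‖ < 1) (n : ℕ) : be s n ≠ 0 :=
  prod_ne_zero_iff.2 fun _ _ => pow_ne_one hs (by omega)
lemma al_ne {s : ℂ} (hs : ‖s‖ < 1) (n : ℕ) : al s n ≠ 0 :=
  prod_ne_zero_iff.2 fun _ _ => pow_ne_neg_one hs (by omega)

lemma al_low {s : ℂ} (h0 : s ≠ 0) (k : ℕ) :
    (∏ r ∈ range k, (1 + s ^ (2 * r + 1) / s ^ (2 * k))) * s ^ (k ^ 2) = al s k := by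
  have h2 : s ^ (k ^ 2) = ∏ i ∈ range k, s ^ (2 * i + 1) := by
    induction k with
    | zero => simp
    | succ n ih => rw [prod_range_succ, ← ih]; ring
  rw [← prod_range_reflect, h2, ← prod_mul_distrib]
  refine prod_congr rfl fun i hi => ?_
  have hi := mem_range.1 hi
  obtain ⟨m, rfl⟩ : ∃ m, k = i + 1 + m := ⟨k - (i + 1), by omega⟩
  have : i + 1 + m - 1 - i = m := by omega
  rw [this]
  field_simp
  ring

lemma be_low {s : ℂ} (h0 : s ≠ 0) (k : ℕ) :
    (∏ r ∈ range k, (1 - s ^ (2 * r) / s ^ (2 * k))) * s ^ (k ^ 2 + k) = (-1) ^ k * be s k := by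
  have h2 : s ^ (k ^ 2 + k) = ∏ i ∈ range k, s ^ (2 * (i + 1)) := by
    induction k with
    | zero => simp
    | succ n ih => rw [prod_range_succ, ← ih]; ring
  have h3 : (-1 : ℂ) ^ k = ∏ i ∈ range k, (-1 : ℂ) := by simp
  rw [← prod_range_reflect, h2, ← prod_mul_distrib, h3, be, ← prod_mul_distrib]
  refine prod_congr rfl fun i hi => ?_
  have hi := mem_range.1 hi
  obtain ⟨m, rfl⟩ : ∃ m, k = i + 1 + m := ⟨k - (i + 1), by omega⟩
  have : i + 1 + m - 1 - i = m := by omega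
  rw [this]
  field_simp
  ring

lemma PP_nd {s : ℂ} (h0 : s ≠ 0) (k m : ℕ) :
    PP s (k + m) (nd s k) * s ^ (k ^ 2) = al s m * al s (2 * k + m) := by
  have e : PP s (k + m) (nd s k) = (∏ r ∈ range (k + m), (1 + s ^ (2 * r + 1) / s ^ (2 * k))) *
      ∏ r ∈ range (k + m), (1 + s ^ (2 * (k + r) + 1)) := by
    rw [PP, ← prod_mul_distrib]
    refine prod_congr rfl fun i hi => ?_
    rw [nd]; field_simp; ring
  have e1 : al s k * ∏ r ∈ range (k + m), (1 + s ^ (2 * (k + r) + 1)) = al s (2 * k + m) := by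
    rw [show 2 * k + m = k + (k + m) by ring, al, al, prod_range_add _ k (k + m)]
  have e2 : (∏ r ∈ range (k + m), (1 + s ^ (2 * r + 1) / s ^ (2 * k))) =
      (∏ r ∈ range k, (1 + s ^ (2 * r + 1) / s ^ (2 * k))) * al s m := by
    rw [prod_range_add, al]
    congr 1
    refine prod_congr rfl fun i hi => ?_
    field_simp; ring
  have e3 := al_low h0 k
  rw [e, e2, ← e1, ← e3]
  ring

lemma bb_nd {s : ℂ} (hs : ‖s‖ < 1) (h0 : s ≠ 0) (k m : ℕ) (hk : k ≠ 0) :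
    (∏ j ∈ (range (k + m + 1)).erase k, bb s j (nd s k)) * s ^ (k ^ 2 + k) * (1 + s ^ (2 * k)) =
      (-1) ^ k * be s m * be s (2 * k + m) := by
  have hb : ∀ j, bb s j (nd s k) = (1 - s ^ (2 * j) / s ^ (2 * k)) * (1 - s ^ (2 * (k + j))) := by
    intro j; rw [bb, nd]; field_simp; ring
  have hmem : k ∈ range (k + m + 1) := by rw [mem_range]; omega
  simp_rw [hb]
  rw [prod_mul_distrib]
  have e1 : be s k * (∏ j ∈ range (k + m + 1), (1 - s ^ (2 * (k + j)))) =
      (1 - s ^ (2 * k)) * be s (2 * k + m) := by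
    rw [prod_range_succ', show 2 * k + m = k + (k + m) by ring, be, be, prod_range_add _ k (k + m)]
    simp only [add_assoc, add_zero]
    ring
  have e2 := mul_prod_erase (range (k + m + 1)) (fun j => (1 - s ^ (2 * (k + j)))) hmem
  have e3 : ∏ j ∈ (range (k + m + 1)).erase k, (1 - s ^ (2 * j) / s ^ (2 * k)) =
      (∏ r ∈ range k, (1 - s ^ (2 * r) / s ^ (2 * k))) * be s m := by
    have : (range (k + m + 1)).erase k = range k ∪ Finset.Ico (k + 1) (k + m + 1) := by
      ext x; simp; omega
    rw [this, prod_union, prod_Ico_eq_prod_range, be, show k + m + 1 - (k + 1) = m by omega]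
    · congr 1
      refine prod_congr rfl fun i hi => ?_
      field_simp; ring
    · rw [Finset.disjoint_left]; intro x; simp; omega
  have e4 := be_low h0 k
  rw [e3]
  rw [← e2] at e1
  have n1 := pow_ne_one hs (n := 2 * k) (by omega)
  have n2 := be_ne hs k
  apply mul_left_cancel₀ n1
  apply mul_left_cancel₀ n2
  generalize (∏ j ∈ (range (k + m + 1)).erase k, (1 - s ^ (2 * (k + j)))) = E at *
  generalize (∏ r ∈ range k, (1 - s ^ (2 * r) / s ^ (2 * k))) = F at *
  linear_combination be s k * be s m * (1 - s ^ (2 * k)) * (1 + s ^ (2 * k)) * E * e4 + (-1) ^ k * be s m * be s k * e1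

lemma nd_inj {s : ℂ} (hs : ‖s‖ < 1) (h0 : s ≠ 0) : Function.Injective (nd s) := by
  have key : ∀ k m : ℕ, nd s k = nd s (k + m) → m = 0 := by
    intro k m h
    by_contra hm
    have n1 := pow_ne_one hs (n := 2 * m) (by omega)
    have n2 := pow_ne_one hs (n := 4 * k + 2 * m) (by omega)
    apply mul_ne_zero n1 n2
    rw [nd, nd] at h
    field_simp at h
    ring_nf at h ⊢
    have : s ^ (k * 2) ≠ 0 := pow_ne_zero _ h0
    apply mul_left_cancel₀ this
    linear_combination -h
  intro a b h
  rcases le_total a b with hab | hab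
  · obtain ⟨m, rfl⟩ := Nat.exists_eq_add_of_le hab
    have := key a m h; omega
  · obtain ⟨m, rfl⟩ := Nat.exists_eq_add_of_le hab
    have := key b m h.symm; omega

lemma lagr {s : ℂ} (hs : ‖s‖ < 1) (h0 : s ≠ 0) (N : ℕ) (w : ℂ) :
    PP s N w = ∑ k ∈ range (N + 1), PP s N (nd s k) *
      ∏ j ∈ (range (N + 1)).erase k, (bb s j w / bb s j (nd s k)) := by
  set f : Polynomial ℂ := ∏ r ∈ range N,
    (Polynomial.C (s ^ (2 * r + 1)) * Polynomial.X + Polynomial.C (1 + s ^ (4 * r + 2))) with hf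
  have ev : ∀ x, f.eval x = PP s N x := by
    intro x
    rw [hf, Polynomial.eval_prod, PP]
    refine prod_congr rfl fun i hi => ?_
    simp; ring
  have hd : f.degree < #(range (N + 1)) := by
    have : f.natDegree ≤ N := by
      refine (Polynomial.natDegree_prod_le _ _).trans ?_
      calc _ ≤ ∑ r ∈ range N, 1 := sum_le_sum fun i _ => Polynomial.natDegree_linear_le
        _ = N := by simp
    rw [card_range]
    refine lt_of_le_of_lt Polynomial.degree_le_natDegree ?_
    exact_mod_cast Nat.lt_succ_of_le this
  have h := Lagrange.eq_interpolate (s := range (N + 1)) (v := nd s) (nd_inj hs h0).injOn hd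
  rw [← ev]
  conv_lhs => rw [h]
  rw [Lagrange.interpolate_apply, Polynomial.eval_finsetSum]
  refine sum_congr rfl fun k hk => ?_
  rw [Polynomial.eval_mul, Polynomial.eval_C, ev, Lagrange.basis, Polynomial.eval_prod]
  congr 1
  refine prod_congr rfl fun j hj => ?_
  have hb : ∀ x, bb s j x = s ^ (2 * j) * (nd s j - x) := by
    intro x; rw [bb, nd]; field_simp; ring
  have : nd s k - nd s j ≠ 0 := sub_ne_zero.2 fun h => (mem_erase.1 hj).1 (nd_inj hs h0 h).symm
  have this' : nd s j - nd s k ≠ 0 := sub_ne_zero.2 fun h => (mem_erase.1 hj).1 (nd_inj hs h0 h)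
  rw [hb, hb, Lagrange.basisDivisor]
  simp only [Polynomial.eval_mul, Polynomial.eval_C, Polynomial.eval_sub, Polynomial.eval_X]
  have : s ^ (2 * j) ≠ 0 := pow_ne_zero _ h0
  field_simp
  ring

lemma coef {s : ℂ} (hs : ‖s‖ < 1) (h0 : s ≠ 0) (N k : ℕ) (hk : k ≠ 0) (hkN : k ≤ N) :
    PP s N (nd s k) / (∏ j ∈ (range (N + 1)).erase k, bb s j (nd s k)) =
      (al s (N - k) / be s (N - k)) * (al s (N + k) / be s (N + k)) *
      ((-1) ^ k * s ^ k * (1 + s ^ (2 * k))) := by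
  obtain ⟨m, rfl⟩ := Nat.exists_eq_add_of_le hkN
  have e1 := PP_nd h0 k m
  have e2 := bb_nd hs h0 k m hk
  rw [show k + m - k = m by omega, show k + m + k = 2 * k + m by omega]
  have n1 := be_ne hs m
  have n2 := be_ne hs (2 * k + m)
  have n3 : (∏ j ∈ (range (k + m + 1)).erase k, bb s j (nd s k)) ≠ 0 := by
    intro h; rw [h] at e2
    simp [n1, n2] at e2
  have h1 : ((-1 : ℂ) ^ k) * (-1) ^ k = 1 := by rw [← mul_pow]; simp
  generalize (∏ j ∈ (range (k + m + 1)).erase k, bb s j (nd s k)) = E at *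
  have n4 : s ^ (k ^ 2) ≠ 0 := pow_ne_zero _ h0
  field_simp
  apply mul_left_cancel₀ n4
  rw [pow_add] at e2
  linear_combination be s m * be s (2 * k + m) * e1 - al s m * al s (2 * k + m) * (-1) ^ k * e2 - al s m * al s (2 * k + m) * be s m * be s (2 * k + m) * h1

lemma coef0 {s : ℂ} (N : ℕ) :
    PP s N (nd s 0) / (∏ j ∈ (range (N + 1)).erase 0, bb s j (nd s 0)) =
      (al s N / be s N) ^ 2 := by
  have : (range (N + 1)).erase 0 = Finset.Ico 1 (N + 1) := by ext x; simp; omega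
  rw [this, prod_Ico_eq_prod_range, div_pow, PP, al, be, ← prod_pow, ← prod_pow]
  congr 1
  · refine prod_congr rfl fun i hi => ?_
    simp [nd]; ring
  · refine prod_congr rfl fun i hi => ?_
    simp [nd, bb]; ring

lemma finite_id {s : ℂ} (hs : ‖s‖ < 1) (h0 : s ≠ 0) (N : ℕ) (w : ℂ)
    (hw : ∀ j, bb s (j + 1) w ≠ 0) :
    PP s N w / ∏ j ∈ range N, bb s (j + 1) w = (al s N / be s N) ^ 2 +
      ∑ k ∈ range N, (al s (N - (k + 1)) / be s (N - (k + 1))) *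
        (al s (N + (k + 1)) / be s (N + (k + 1))) *
      ((-1) ^ (k + 1) * s ^ (k + 1) * (1 + s ^ (2 * (k + 1))) * (bb s 0 w / bb s (k + 1) w)) := by
  have hp : ∏ j ∈ range N, bb s (j + 1) w ≠ 0 := prod_ne_zero_iff.2 fun j _ => hw j
  rw [lagr hs h0 N w, sum_range_succ', add_div, sum_div, add_comm]
  congr 1
  · rw [prod_div_distrib, ← coef0]
    have : (range (N + 1)).erase 0 = Finset.Ico 1 (N + 1) := by ext x; simp; omega
    have h : ∏ j ∈ (range (N + 1)).erase 0, bb s j w = ∏ j ∈ range N, bb s (j + 1) w := by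
      rw [this, prod_Ico_eq_prod_range]
      simp [add_comm]
    rw [h]
    field_simp
  · refine sum_congr rfl fun k hk => ?_
    have hk := mem_range.1 hk
    rw [← mul_assoc, ← coef hs h0 N (k + 1) (by omega) (by omega), prod_div_distrib]
    have h : bb s (k + 1) w * ∏ j ∈ (range (N + 1)).erase (k + 1), bb s j w =
        (∏ j ∈ range N, bb s (j + 1) w) * bb s 0 w := by
      rw [mul_prod_erase _ (fun j => bb s j w) (by simp; omega), prod_range_succ']
    have := hw k
    have h' : ∏ j ∈ (range (N + 1)).erase (k + 1), bb s j w =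
      (∏ j ∈ range N, bb s (j + 1) w) * bb s 0 w / bb s (k + 1) w := by
      rw [← h]; field_simp
    rw [h']
    field_simp

lemma summ {q : ℂ} (hq : ‖q‖ < 1) (a : ℂ) : Summable fun r : ℕ => ‖-(a * q ^ r)‖ := by
  simp only [norm_neg, norm_mul, norm_pow]
  exact (summable_geometric_of_lt_one (norm_nonneg _) hq).mul_left _

lemma tend {q : ℂ} (hq : ‖q‖ < 1) (a : ℂ) :
    Tendsto (fun N => ∏ r ∈ range N, (1 - a * q ^ r)) atTop (𝓝 (qpoch a q)) := by
  have h := (multipliable_one_add_of_summable (summ hq a)).tendsto_prod_tprod_nat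
  simpa only [← sub_eq_add_neg, qpoch] using h

lemma qpoch_ne {q : ℂ} (hq : ‖q‖ < 1) (a : ℂ) (h : ∀ r : ℕ, 1 - a * q ^ r ≠ 0) :
    qpoch a q ≠ 0 := by
  have h := tprod_one_add_ne_zero_of_summable (f := fun r : ℕ => -(a * q ^ r))
    (fun r => by simpa only [← sub_eq_add_neg] using h r) (summ hq a)
  simpa only [← sub_eq_add_neg, qpoch] using h

lemma main {s : ℂ} (hs : ‖s‖ < 1) (h0 : s ≠ 0) (w A L : ℂ) (hA : A ≠ 0)
    (hw : ∀ j, bb s (j + 1) w ≠ 0)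
    (hL : Tendsto (fun N => PP s N w / ∏ j ∈ range N, bb s (j + 1) w) atTop (𝓝 L))
    (ha : Tendsto (fun N => al s N / be s N) atTop (𝓝 A)) :
    L / A ^ 2 = 1 + ∑' k : ℕ, ((-1) ^ (k + 1) * s ^ (k + 1) * (1 + s ^ (2 * (k + 1))) *
      (bb s 0 w / bb s (k + 1) w)) := by
  set T : ℕ → ℂ := fun k => ((-1) ^ (k + 1) * s ^ (k + 1) * (1 + s ^ (2 * (k + 1))) *
      (bb s 0 w / bb s (k + 1) w)) with hT
  set a : ℕ → ℂ := fun N => al s N / be s N with haa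
  obtain ⟨C, hC⟩ : ∃ C, ∀ n, ‖a n‖ ≤ C := by
    obtain ⟨C, hC⟩ := (Metric.isBounded_range_of_tendsto a ha).exists_norm_le
    exact ⟨C, fun n => hC _ ⟨n, rfl⟩⟩
  have hC0 : 0 ≤ C := (norm_nonneg _).trans (hC 0)
  have hpow : ∀ c : ℕ, c ≠ 0 → Tendsto (fun k : ℕ => s ^ (c * (k + 1))) atTop (𝓝 0) := by
    intro c hc
    refine (tendsto_pow_atTop_nhds_zero_of_norm_lt_one hs).comp ?_
    refine tendsto_atTop_mono (fun k => ?_) tendsto_id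
    simp only [id]; nlinarith [Nat.pos_of_ne_zero hc]
  obtain ⟨D, hD⟩ : ∃ D, ∀ k, ‖(1 + s ^ (2 * (k + 1))) * (bb s 0 w / bb s (k + 1) w)‖ ≤ D := by
    have h1 : Tendsto (fun k => bb s (k + 1) w) atTop (𝓝 (1 + 0 - 0 * w)) := by
      simp only [bb]
      exact ((tendsto_const_nhds.add (hpow 4 (by norm_num)))).sub
        ((hpow 2 (by norm_num)).mul_const w)
    have h2 := ((hpow 2 (by norm_num)).const_add 1).mul
      ((tendsto_const_nhds (x := bb s 0 w)).div h1 (by simp))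
    obtain ⟨C, hC⟩ := (Metric.isBounded_range_of_tendsto _ h2).exists_norm_le
    exact ⟨C, fun n => hC _ ⟨n, rfl⟩⟩
  have hD0 : 0 ≤ D := (norm_nonneg _).trans (hD 0)
  have hTb : ∀ k, ‖T k‖ ≤ ‖s‖ ^ k * D := by
    intro k
    rw [hT]
    simp only
    rw [mul_assoc, norm_mul]
    refine mul_le_mul ?_ (hD k) (norm_nonneg _) (by positivity)
    simp only [norm_mul, norm_pow, norm_neg, norm_one, one_pow, one_mul]
    exact pow_le_pow_of_le_one (norm_nonneg _) hs.le (by omega)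
  set F : ℕ → ℕ → ℂ := fun N k => if k < N then a (N - (k + 1)) * a (N + (k + 1)) * T k else 0
    with hF
  have hlim : Tendsto (fun N => ∑' k, F N k) atTop (𝓝 (∑' k, A * A * T k)) := by
    refine tendsto_tsum_of_dominated_convergence (bound := fun k => C * C * (‖s‖ ^ k * D)) ?_ ?_ ?_
    · exact ((summable_geometric_of_lt_one (norm_nonneg _) hs).mul_right D).mul_left _
    · intro k
      have h1 : Tendsto (fun N => a (N - (k + 1)) * a (N + (k + 1)) * T k) atTop
          (𝓝 (A * A * T k)) :=
        ((ha.comp (tendsto_sub_atTop_nat (k + 1))).mul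
          (ha.comp (tendsto_add_atTop_nat (k + 1)))).mul_const _
      refine h1.congr' ?_
      filter_upwards [eventually_gt_atTop k] with N hN
      simp [hF, hN]
    · refine Eventually.of_forall fun N k => ?_
      simp only [hF]
      split_ifs
      · rw [norm_mul, norm_mul]
        exact mul_le_mul (mul_le_mul (hC _) (hC _) (norm_nonneg _) hC0) (hTb k) (norm_nonneg _)
          (by positivity)
      · simp; positivity
  have hid : ∀ N, PP s N w / ∏ j ∈ range N, bb s (j + 1) w = a N ^ 2 + ∑' k, F N k := by
    intro N
    rw [finite_id hs h0 N w hw, tsum_eq_sum (s := range N)]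
    · congr 1
      refine sum_congr rfl fun k hk => ?_
      simp [hF, mem_range.1 hk, haa, hT]
    · intro k hk
      simp only [mem_range] at hk
      simp [hF, hk]
  have h2 := tendsto_nhds_unique hL (((ha.pow 2).add hlim).congr fun N => (hid N).symm)
  rw [h2, tsum_mul_left]
  field_simp

end FQ

theorem fermionic_q_identity_half (s u : ℂ) (hs : ‖s‖ < 1) (hu : u ≠ 0)
    (h1 : ∀ r : ℕ, 1 - (s ^ 2) ^ (r + 1) * u ^ 2 ≠ 0)
    (h2 : ∀ r : ℕ, 1 - (s ^ 2) ^ (r + 1) * (u ^ 2)⁻¹ ≠ 0) :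
    qpoch (-(s * u ^ 2)) (s ^ 2) * qpoch (-(s * (u ^ 2)⁻¹)) (s ^ 2) *
        (qpoch (s ^ 2) (s ^ 2)) ^ 2 /
      (qpoch (s ^ 2 * u ^ 2) (s ^ 2) * qpoch (s ^ 2 * (u ^ 2)⁻¹) (s ^ 2) *
        (qpoch (-s) (s ^ 2)) ^ 2)
    = 1 + (u - u⁻¹) *
        ∑' r : ℕ,
          ((-1 : ℂ) ^ r * s ^ (r + 1) * u / (1 - (s ^ 2) ^ (r + 1) * u ^ 2)
            - (-1 : ℂ) ^ r * s ^ (r + 1) * u⁻¹ / (1 - (s ^ 2) ^ (r + 1) * (u ^ 2)⁻¹)) := by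
  by_cases h0 : s = 0
  · subst h0
    simp [qpoch]
  have hq : ‖s ^ 2‖ < 1 := by rw [norm_pow]; exact pow_lt_one₀ (norm_nonneg _) hs (by norm_num)
  have n1 : qpoch (s ^ 2 * u ^ 2) (s ^ 2) ≠ 0 :=
    FQ.qpoch_ne hq _ fun r => by convert h1 r using 1; ring
  have n2 : qpoch (s ^ 2 * (u ^ 2)⁻¹) (s ^ 2) ≠ 0 :=
    FQ.qpoch_ne hq _ fun r => by convert h2 r using 1; ring
  have n3 : qpoch (s ^ 2) (s ^ 2) ≠ 0 :=
    FQ.qpoch_ne hq _ fun r => by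
      convert FQ.pow_ne_one hs (n := 2 * (r + 1)) (by omega) using 1; ring
  have n4 : qpoch (-s) (s ^ 2) ≠ 0 :=
    FQ.qpoch_ne hq _ fun r => by
      convert FQ.pow_ne_neg_one hs (n := 2 * r + 1) (by omega) using 1; ring
  have hb : ∀ j, FQ.bb s j (u ^ 2 + (u ^ 2)⁻¹) =
      (1 - (s ^ 2) ^ j * u ^ 2) * (1 - (s ^ 2) ^ j * (u ^ 2)⁻¹) := by
    intro j; rw [FQ.bb]; field_simp; ring
  have ha : Filter.Tendsto (fun N => FQ.al s N / FQ.be s N) Filter.atTop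
      (nhds (qpoch (-s) (s ^ 2) / qpoch (s ^ 2) (s ^ 2))) := by
    refine ((FQ.tend hq (-s)).div (FQ.tend hq (s ^ 2)) n3).congr fun N => ?_
    rw [Pi.div_apply, FQ.al, FQ.be]
    congr 1 <;> exact Finset.prod_congr rfl fun i _ => by ring
  have hL : Filter.Tendsto (fun N => FQ.PP s N (u ^ 2 + (u ^ 2)⁻¹) /
      ∏ j ∈ Finset.range N, FQ.bb s (j + 1) (u ^ 2 + (u ^ 2)⁻¹)) Filter.atTop
      (nhds (qpoch (-(s * u ^ 2)) (s ^ 2) * qpoch (-(s * (u ^ 2)⁻¹)) (s ^ 2) /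
        (qpoch (s ^ 2 * u ^ 2) (s ^ 2) * qpoch (s ^ 2 * (u ^ 2)⁻¹) (s ^ 2)))) := by
    refine (((FQ.tend hq _).mul (FQ.tend hq _)).div ((FQ.tend hq _).mul (FQ.tend hq _))
      (mul_ne_zero n1 n2)).congr fun N => ?_
    rw [Pi.div_apply, FQ.PP, ← Finset.prod_mul_distrib, ← Finset.prod_mul_distrib]
    congr 1
    · exact Finset.prod_congr rfl fun i _ => by field_simp; ring
    · exact Finset.prod_congr rfl fun i _ => by rw [hb]; ring
  have key := FQ.main hs h0 _ _ _ (div_ne_zero n4 n3)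
    (fun j => by rw [hb]; exact mul_ne_zero (h1 j) (h2 j)) hL ha
  rw [← tsum_mul_left]
  convert key using 1
  · field_simp
  · congr 1
    refine tsum_congr fun k => ?_
    have a1 := h1 k
    have a2 := h2 k
    rw [hb, hb]
    have a3 : u ^ 2 - (s ^ 2) ^ (k + 1) ≠ 0 := by
      intro h
      apply a2
      have : (s ^ 2) ^ (k + 1) = u ^ 2 := by linear_combination -h
      rw [this]; field_simp; ring
    have e2 : 1 - (s ^ 2) ^ (k + 1) * (u ^ 2)⁻¹ = (u ^ 2 - (s ^ 2) ^ (k + 1)) / u ^ 2 := by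
      field_simp
    rw [e2, show s ^ (2 * (k + 1)) = (s ^ 2) ^ (k + 1) by rw [pow_mul]]
    generalize (s ^ 2) ^ (k + 1) = Q at *
    rw [pow_succ (-1 : ℂ) k]
    generalize (-1 : ℂ) ^ k = e at *
    generalize s ^ (k + 1) = S at *
    have a4 : 1 - u ^ 2 * Q ≠ 0 := by rwa [mul_comm]
    field_simp
    ring
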